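/- Suppose f satisfies quadratic growth with parameter α > 0 w.r.t. K. Let δ > 0, κ ≥ 0, C ≥ f(x_1) − f*, and M_1 ≥ max{ 4β/α + 8βD_{F*}²·max{2κ, δ⁻¹}, 1/2 }. Consider sequences generated as follows: x_1 ∈ V; at each step t ≥ 1, x_t = ∑_{i=1}^{k_t} λ_i v_i is a convex combination of vertices v_i ∈ V, v_{k_t+1} ∈ argmin_{u∈V} ( uᵀ∇f(x_t) + βρ_t‖u − x_t‖² ) with ρ_t = min{ √( 2·max{2κ, δ⁻¹}·C·exp(−(t−1)/(4M_1)) ), 1 } / (2M_1), and x_{t+1} minimizes either x ↦ xᵀ∇f(x_t) + (β/2)‖x − x_t‖² or f itself over conv(v_1,…,v_{k_t+1}). Assume additionally that for every t, letting x_t* ∈ X* be the point of X* closest to x_t and h_t = f(x_t) − f*, there exist Δ*_i ∈ [0,λ_i] and z ∈ F* such that x_t* = ∑_{i=1}^{k_t} (λ_i − Δ*_i)v_i + (∑Δ*_i)z and ∑_{i=1}^{k_t} Δ*_i ≤ min{ 1, δ⁻¹h_t + √(κh_t) }. Then for all t ≥ 1: f(x_t) − f* ≤ C·exp(−(t−1)/(4M_1)).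 -/

import Mathlib

open scoped RealInnerProductSpace BigOperators
open Metric

/-!
Let `x = ∑ λᵢ vᵢ` be the current iterate and `p = ∑ (λᵢ - Δᵢ) vᵢ + S z`, with `S = ∑ Δᵢ`, its
closest optimal point. Moving the mass `S` to the oracle's vertex `w` instead of `z` gives the
point `y = p + S (w - z)`, which is feasible for the next fully corrective step. Since `z` is a
convex combination of vertices within distance `D` of `p`, optimality of `w` bounds
`⟪∇f x, w - z⟫`; the proximal term of the oracle pays for the part `S (w - x)` of `y - x`, and the
rest of `‖y - x‖²` is `O(D² S² + ‖x - p‖²)`. Quadratic growth and `S² = O(f x - f*)` make this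
remainder proportional to the gap, so that a step of length `1 / (2 M)` from `x` towards `y`
shrinks the gap by the factor `1 - 1 / (4 M) ≤ exp (-1 / (4 M))`.
-/

lemma norm_add_sq_le_two_mul {E : Type*} [SeminormedAddGroup E] (a b : E) :
    ‖a + b‖ ^ 2 ≤ 2 * ‖a‖ ^ 2 + 2 * ‖b‖ ^ 2 := by
  rw [← mul_add]
  exact (pow_le_pow_left₀ (norm_nonneg _) (norm_add_le a b) 2).trans add_sq_le

section Convex

variable {𝕜 E : Type*} [Field 𝕜] [LinearOrder 𝕜] [IsStrictOrderedRing 𝕜] [AddCommGroup E]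
  [Module 𝕜 E]

lemma convex_setOf_mem_and_eq_of_forall_le {f : E → 𝕜} {s : Set E} (hf : ConvexOn 𝕜 s f)
    {c : 𝕜} (hc : ∀ y ∈ s, c ≤ f y) : Convex 𝕜 {y | y ∈ s ∧ f y = c} := by
  convert hf.convex_le c using 1
  ext y
  exact and_congr_right fun hy ↦ ⟨le_of_eq, fun h ↦ h.antisymm (hc y hy)⟩

lemma sum_sub_smul_add_smul_mem_convexHull_insert {ι : Type*} [Fintype ι] {v : ι → E} {w : E}
    {lam Δ : ι → 𝕜} (hlam1 : ∑ i, lam i = 1) (hΔ : ∀ i, Δ i ∈ Set.Icc 0 (lam i)) :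
    ∑ i, (lam i - Δ i) • v i + (∑ i, Δ i) • w ∈ convexHull 𝕜 (insert w (Set.range v)) := by
  refine mem_convexHull_of_exists_fintype (fun o : Option ι ↦ o.elim (∑ i, Δ i) (lam - Δ))
    (fun o ↦ o.elim w v) ?_ ?_ ?_ ?_
  · rintro (_ | i)
    exacts [Finset.sum_nonneg fun i _ ↦ (hΔ i).1, sub_nonneg.2 (hΔ i).2]
  · simp [Fintype.sum_option, hlam1]
  · rintro (_ | i)
    exacts [Set.mem_insert _ _, Set.mem_insert_of_mem _ (Set.mem_range_self i)]
  · rw [Fintype.sum_option, add_comm]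
    rfl

end Convex

section Hilbert

variable {E : Type*} [NormedAddCommGroup E] [InnerProductSpace ℝ E]

lemma exists_norm_sub_eq_infDist_of_isComplete_convex {s : Set E} (hne : s.Nonempty)
    (hcompl : IsComplete s) (hconv : Convex ℝ s) (x : E) : ∃ p ∈ s, ‖x - p‖ = infDist x s := by
  simpa only [infDist_eq_iInf, dist_eq_norm] using
    exists_norm_eq_iInf_of_complete_convex hne hcompl hconv x

/-- The quadratic model `f x + ⟪g x, y - x⟫ + β / 2 * ‖y - x‖²` of `f` around `x`, with `g` in the
role of the gradient of `f`. -/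
noncomputable def quadModel (f : E → ℝ) (g : E → E) (β : ℝ) (x y : E) : ℝ :=
  f x + ⟪g x, y - x⟫ + β / 2 * ‖y - x‖ ^ 2

section Gradient

variable [CompleteSpace E] {f : E → ℝ} {g : E → E} {s : Set E} {β : ℝ} {a b v : E}

lemma hasDerivWithinAt_comp_lineMap {u : Set ℝ} {t : ℝ}
    (hf : HasGradientWithinAt f v s (AffineMap.lineMap a b t))
    (hu : Set.MapsTo (AffineMap.lineMap a b) u s) :
    HasDerivWithinAt (fun r : ℝ ↦ f (AffineMap.lineMap a b r)) ⟪v, b - a⟫ u t := by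
  have h := hf.hasFDerivWithinAt.comp_hasDerivWithinAt t AffineMap.hasDerivWithinAt_lineMap hu
  rwa [InnerProductSpace.toDual_apply_apply] at h

lemma add_inner_le_of_convexOn_of_hasGradientWithinAt (hf : ConvexOn ℝ s f)
    (hv : HasGradientWithinAt f v s a) (ha : a ∈ s) (hb : b ∈ s) :
    f a + ⟪v, b - a⟫ ≤ f b := by
  have hline : ConvexOn ℝ (Set.Icc 0 1) (fun r : ℝ ↦ f (AffineMap.lineMap a b r)) :=
    (hf.comp_affineMap (AffineMap.lineMap a b)).subset
      (fun _ ht ↦ hf.1.lineMap_mem ha hb ht) (convex_Icc 0 1)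
  have hslope := hline.le_slope_of_hasDerivWithinAt (Set.left_mem_Icc.2 zero_le_one)
    (Set.right_mem_Icc.2 zero_le_one) zero_lt_one
    (hasDerivWithinAt_comp_lineMap (by simpa only [AffineMap.lineMap_apply_zero] using hv)
      fun _ ht ↦ hf.1.lineMap_mem ha hb ht)
  simp only [slope_def_field, AffineMap.lineMap_apply_zero, AffineMap.lineMap_apply_one, sub_zero,
    div_one] at hslope
  linarith

lemma le_quadModel_of_lipschitz_gradient (hs : Convex ℝ s)
    (hg : ∀ y ∈ s, HasGradientWithinAt f (g y) s y)
    (hlip : ∀ y ∈ s, ∀ z ∈ s, ‖g y - g z‖ ≤ β * ‖y - z‖) (ha : a ∈ s) (hb : b ∈ s) :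
    f b ≤ quadModel f g β a b := by
  have hmem : Set.MapsTo (AffineMap.lineMap a b) (Set.Icc (0 : ℝ) 1) s :=
    fun _ ht ↦ hs.lineMap_mem ha hb ht
  let φ : ℝ → ℝ := fun t ↦
    f (AffineMap.lineMap a b t) - (t * ⟪g a, b - a⟫ + β / 2 * ‖b - a‖ ^ 2 * t ^ 2)
  have hφ : ∀ t ∈ Set.Icc (0 : ℝ) 1, HasDerivWithinAt φ
      (⟪g (AffineMap.lineMap a b t) - g a, b - a⟫ - β * ‖b - a‖ ^ 2 * t) (Set.Icc 0 1) t := by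
    intro t ht
    have hlin := (hasDerivWithinAt_id t (Set.Icc 0 1)).mul_const ⟪g a, b - a⟫
    have hquad := ((hasDerivWithinAt_id t (Set.Icc 0 1)).pow 2).const_mul (β / 2 * ‖b - a‖ ^ 2)
    refine ((hasDerivWithinAt_comp_lineMap (hg _ (hmem ht)) hmem).sub
      (hlin.add hquad)).congr_deriv ?_
    simp only [id, inner_sub_left, Nat.cast_ofNat]
    ring
  have hφ_nonpos : ∀ t ∈ Set.Icc (0 : ℝ) 1,
      ⟪g (AffineMap.lineMap a b t) - g a, b - a⟫ - β * ‖b - a‖ ^ 2 * t ≤ 0 := by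
    intro t ht
    rw [sub_nonpos]
    calc ⟪g (AffineMap.lineMap a b t) - g a, b - a⟫
        ≤ ‖g (AffineMap.lineMap a b t) - g a‖ * ‖b - a‖ := real_inner_le_norm _ _
      _ ≤ β * ‖AffineMap.lineMap a b t - a‖ * ‖b - a‖ := by
        gcongr
        exact hlip _ (hmem ht) _ ha
      _ = β * ‖b - a‖ ^ 2 * t := by
        rw [AffineMap.lineMap_apply_module', add_sub_cancel_right, norm_smul,
          Real.norm_of_nonneg ht.1]
        ring
  have hanti : AntitoneOn φ (Set.Icc 0 1) :=
    antitoneOn_of_hasDerivWithinAt_nonpos (convex_Icc 0 1)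
      (fun t ht ↦ (hφ t ht).continuousWithinAt)
      (fun t ht ↦ (hφ t (interior_subset ht)).mono interior_subset)
      (fun t ht ↦ hφ_nonpos t (interior_subset ht))
  have hend := hanti (Set.left_mem_Icc.2 zero_le_one) (Set.right_mem_Icc.2 zero_le_one) zero_le_one
  simp only [φ, AffineMap.lineMap_apply_zero, AffineMap.lineMap_apply_one] at hend
  rw [quadModel]
  linarith

lemma isClosed_setOf_mem_and_eq_of_hasGradientWithinAt (hs : IsClosed s)
    (hg : ∀ y ∈ s, HasGradientWithinAt f (g y) s y) (c : ℝ) : IsClosed {y | y ∈ s ∧ f y = c} :=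
  have hcont : ContinuousOn f s := fun y hy ↦ (hg y hy).hasFDerivWithinAt.continuousWithinAt
  hcont.preimage_isClosed_of_isClosed hs (isClosed_singleton (x := c))

end Gradient

lemma inner_add_le_of_mem_convexHull {A : Set E} {q x p w z : E} {c D : ℝ} (hc : 0 ≤ c)
    (hw : ∀ u ∈ A, ⟪q, w⟫ + c * ‖w - x‖ ^ 2 ≤ ⟪q, u⟫ + c * ‖u - x‖ ^ 2)
    (hD : A ⊆ closedBall p D) (hz : z ∈ convexHull ℝ A) :
    ⟪q, w⟫ + c * ‖w - x‖ ^ 2 ≤ ⟪q, z⟫ + c * (2 * D ^ 2 + 2 * ‖x - p‖ ^ 2) := by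
  have hhalf : Convex ℝ {u : E | ⟪q, w⟫ + c * ‖w - x‖ ^ 2 - c * (2 * D ^ 2 + 2 * ‖x - p‖ ^ 2)
      ≤ ⟪q, u⟫} := convex_halfSpace_ge (innerₗ E q).isLinear _
  refine sub_le_iff_le_add.1 (convexHull_min (fun u hu ↦ ?_) hhalf hz)
  have hux : ‖u - x‖ ^ 2 ≤ 2 * D ^ 2 + 2 * ‖x - p‖ ^ 2 := by
    calc ‖u - x‖ ^ 2 = ‖(u - p) + (p - x)‖ ^ 2 := by rw [sub_add_sub_cancel]
      _ ≤ 2 * ‖u - p‖ ^ 2 + 2 * ‖p - x‖ ^ 2 := norm_add_sq_le_two_mul _ _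
      _ ≤ 2 * D ^ 2 + 2 * ‖x - p‖ ^ 2 := by
        rw [norm_sub_rev p x]
        gcongr
        exact mem_closedBall_iff_norm.1 (hD hu)
  exact sub_le_iff_le_add.2 ((hw u hu).trans (by gcongr))

lemma norm_add_smul_sub_sub_sq_le {x p w z : E} {S D : ℝ} (hz : ‖p - z‖ ≤ D) :
    ‖p + S • (w - z) - x‖ ^ 2
      ≤ 2 * S ^ 2 * ‖w - x‖ ^ 2 + 4 * (1 - S) ^ 2 * ‖x - p‖ ^ 2 + 4 * S ^ 2 * D ^ 2 := by
  calc ‖p + S • (w - z) - x‖ ^ 2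
      = ‖S • (w - x) + ((1 - S) • (p - x) + S • (p - z))‖ ^ 2 := by congr 2; module
    _ ≤ 2 * ‖S • (w - x)‖ ^ 2
        + 2 * (2 * ‖(1 - S) • (p - x)‖ ^ 2 + 2 * ‖S • (p - z)‖ ^ 2) := by
      grw [norm_add_sq_le_two_mul, norm_add_sq_le_two_mul]
    _ = 2 * S ^ 2 * ‖w - x‖ ^ 2 + 4 * (1 - S) ^ 2 * ‖x - p‖ ^ 2 + 4 * S ^ 2 * ‖p - z‖ ^ 2 := by
      simp only [norm_smul, mul_pow, Real.norm_eq_abs, sq_abs, norm_sub_rev p x]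
      ring
    _ ≤ _ := by gcongr

lemma inner_add_norm_sq_le_of_transfer {q x p w z : E} {S s γ D : ℝ} (hS : 0 ≤ S) (hSs : S ≤ s)
    (hs : s ≤ 1) (hγ : 0 ≤ γ) (hz : ‖p - z‖ ≤ D)
    (hw : ⟪q, w⟫ + γ * s * ‖w - x‖ ^ 2 ≤ ⟪q, z⟫ + γ * s * (2 * D ^ 2 + 2 * ‖x - p‖ ^ 2)) :
    ⟪q, p + S • (w - z) - x⟫ + γ / 2 * ‖p + S • (w - z) - x‖ ^ 2
      ≤ ⟪q, p - x⟫ + γ * (4 * s ^ 2 * D ^ 2 + 2 * ‖x - p‖ ^ 2) := by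
  have hinner : ⟪q, p + S • (w - z) - x⟫ = ⟪q, p - x⟫ + S * (⟪q, w⟫ - ⟪q, z⟫) := by
    rw [add_sub_right_comm, inner_add_right, real_inner_smul_right, inner_sub_right q w z]
  have horacle : S * (⟪q, w⟫ - ⟪q, z⟫)
      ≤ γ * (S * s * (2 * D ^ 2 + 2 * ‖x - p‖ ^ 2 - ‖w - x‖ ^ 2)) := by
    linarith [mul_le_mul_of_nonneg_left hw hS]
  have hcoeff : S * s * (2 * D ^ 2 + 2 * ‖x - p‖ ^ 2 - ‖w - x‖ ^ 2)
      + (S ^ 2 * ‖w - x‖ ^ 2 + 2 * (1 - S) ^ 2 * ‖x - p‖ ^ 2 + 2 * S ^ 2 * D ^ 2)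
      ≤ 4 * s ^ 2 * D ^ 2 + 2 * ‖x - p‖ ^ 2 := by
    have hW : 0 ≤ S * (s - S) * ‖w - x‖ ^ 2 :=
      mul_nonneg (mul_nonneg hS (by linarith)) (sq_nonneg _)
    have hP : 0 ≤ S * ((1 - S) + (1 - s)) * ‖x - p‖ ^ 2 :=
      mul_nonneg (mul_nonneg hS (by linarith)) (sq_nonneg _)
    have hD : 0 ≤ (s - S) * (4 * s + 2 * S) * D ^ 2 :=
      mul_nonneg (mul_nonneg (by linarith) (by linarith)) (sq_nonneg _)
    linarith
  have hnorm := mul_le_mul_of_nonneg_left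
    (norm_add_smul_sub_sub_sq_le (x := x) (w := w) (S := S) hz) (div_nonneg hγ zero_le_two)
  rw [hinner]
  linarith [mul_le_mul_of_nonneg_left hcoeff hγ]

lemma quadModel_sub_le_of_inner_add_norm_sq_le {f : E → ℝ} {g : E → E} {x y p : E}
    {α β m M D s e c : ℝ} (hα : 0 < α) (hβ : 0 ≤ β) (hM : 4 * β / α + 8 * β * D ^ 2 * m ≤ M)
    (hM' : 1 / 2 ≤ M) (he : f x - c ≤ e) (hs : s ^ 2 ≤ 2 * m * e)
    (hgrowth : ‖x - p‖ ^ 2 ≤ 2 / α * (f x - c)) (hsupport : f x + ⟪g x, p - x⟫ ≤ c)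
    (hy : ⟪g x, y - x⟫ + β * (2 * M)⁻¹ / 2 * ‖y - x‖ ^ 2
      ≤ ⟪g x, p - x⟫ + β * (2 * M)⁻¹ * (4 * s ^ 2 * D ^ 2 + 2 * ‖x - p‖ ^ 2)) :
    quadModel f g β x (x + (2 * M)⁻¹ • (y - x)) - c ≤ (1 - 1 / (4 * M)) * e := by
  have : 0 < M := by linarith
  have he0 : 0 ≤ e :=
    ((mul_nonneg_iff_of_pos_left (by positivity)).1 ((sq_nonneg _).trans hgrowth)).trans he
  set η := (2 * M)⁻¹ with hη
  have : 0 ≤ η := by positivity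
  have hη1 : η ≤ 1 := inv_le_one_of_one_le₀ (by linarith)
  have hremainder : β * η * (4 * s ^ 2 * D ^ 2 + 2 * ‖x - p‖ ^ 2) ≤ e / 2 := by
    calc β * η * (4 * s ^ 2 * D ^ 2 + 2 * ‖x - p‖ ^ 2)
        ≤ β * η * (4 * (2 * m * e) * D ^ 2 + 2 * (2 / α * e)) := by
          gcongr
          exact hgrowth.trans (by gcongr)
      _ = η * ((4 * β / α + 8 * β * D ^ 2 * m) * e) := by ring
      _ ≤ η * (M * e) := by gcongr
      _ = e / 2 := by rw [hη]; field_simp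
  have hinner : ⟪g x, y - x⟫ + β * η / 2 * ‖y - x‖ ^ 2 ≤ -(f x - c) + e / 2 := by linarith
  calc quadModel f g β x (x + η • (y - x)) - c
      = f x - c + η * (⟪g x, y - x⟫ + β * η / 2 * ‖y - x‖ ^ 2) := by
        rw [quadModel, add_sub_cancel_left, real_inner_smul_right, norm_smul, mul_pow,
          Real.norm_eq_abs, sq_abs]
        ring
    _ ≤ f x - c + η * (-(f x - c) + e / 2) := by gcongr
    _ = (1 - η) * (f x - c) + η / 2 * e := by ring
    _ ≤ (1 - η) * e + η / 2 * e := by gcongr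
    _ = (1 - 1 / (4 * M)) * e := by rw [hη]; field_simp; ring

lemma exists_mem_convexHull_quadModel_sub_le {ι : Type*} [Fintype ι] {f : E → ℝ} {g : E → E}
    {v : ι → E} {lam Δ : ι → ℝ} {A : Set E} {x p w z : E} {α β m M D e c : ℝ}
    (hα : 0 < α) (hβ : 0 ≤ β) (hm : 0 ≤ m) (hM : 4 * β / α + 8 * β * D ^ 2 * m ≤ M)
    (hM' : 1 / 2 ≤ M) (hx : x = ∑ i, lam i • v i) (hlam1 : ∑ i, lam i = 1)
    (hΔ : ∀ i, Δ i ∈ Set.Icc 0 (lam i))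
    (hp : p = ∑ i, (lam i - Δ i) • v i + (∑ i, Δ i) • z) (hz : z ∈ convexHull ℝ A)
    (hA : A ⊆ closedBall p D) (hΔs : ∑ i, Δ i ≤ min √(2 * m * (f x - c)) 1)
    (hw : ∀ u ∈ A, ⟪g x, w⟫ + β * (min √(2 * m * e) 1 / (2 * M)) * ‖w - x‖ ^ 2
      ≤ ⟪g x, u⟫ + β * (min √(2 * m * e) 1 / (2 * M)) * ‖u - x‖ ^ 2)
    (he : f x - c ≤ e) (hgrowth : ‖x - p‖ ^ 2 ≤ 2 / α * (f x - c))
    (hsupport : f x + ⟪g x, p - x⟫ ≤ c) :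
    ∃ y ∈ convexHull ℝ (insert w (Set.range v)),
      quadModel f g β x y - c ≤ (1 - 1 / (4 * M)) * e := by
  have : 0 < M := by linarith
  have hS : 0 ≤ ∑ i, Δ i := Finset.sum_nonneg fun i _ ↦ (hΔ i).1
  have he0 : 0 ≤ e :=
    ((mul_nonneg_iff_of_pos_left (by positivity)).1 ((sq_nonneg _).trans hgrowth)).trans he
  have hSs : ∑ i, Δ i ≤ min √(2 * m * e) 1 := hΔs.trans (by gcongr)
  set s := min √(2 * m * e) 1
  have hs0 : 0 ≤ s := hS.trans hSs
  have hs : s ^ 2 ≤ 2 * m * e :=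
    (pow_le_pow_left₀ hs0 (min_le_left _ _) 2).trans_eq (Real.sq_sqrt (by positivity))
  have hzD : ‖p - z‖ ≤ D := by
    rw [norm_sub_rev, ← mem_closedBall_iff_norm]
    exact convexHull_min hA (convex_closedBall p D) hz
  have horacle := inner_add_le_of_mem_convexHull (by positivity) hw hA hz
  rw [show β * (s / (2 * M)) = β * (2 * M)⁻¹ * s by ring] at horacle
  refine ⟨_, ?_, quadModel_sub_le_of_inner_add_norm_sq_le hα hβ hM hM' he hs hgrowth hsupport
    (inner_add_norm_sq_le_of_transfer hS hSs (min_le_right _ _) (by positivity) hzD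
      horacle)⟩
  have hxmem : x ∈ convexHull ℝ (insert w (Set.range v)) :=
    mem_convexHull_of_exists_fintype lam v (fun i ↦ (hΔ i).1.trans (hΔ i).2) hlam1
      (fun i ↦ Set.mem_insert_of_mem _ (Set.mem_range_self i)) hx.symm
  have hymem : p + (∑ i, Δ i) • (w - z) ∈ convexHull ℝ (insert w (Set.range v)) := by
    convert sum_sub_smul_add_smul_mem_convexHull_insert (w := w) (v := v) hlam1 hΔ using 1
    rw [hp]
    module
  exact (convex_convexHull ℝ _).add_smul_sub_mem hxmem hymem
    ⟨by positivity, inv_le_one_of_one_le₀ (by linarith)⟩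

lemma le_quadModel_of_isMinOn [CompleteSpace E] {f : E → ℝ} {g : E → E} {s H : Set E} {β : ℝ}
    {x x' y : E} (hs : Convex ℝ s) (hg : ∀ y ∈ s, HasGradientWithinAt f (g y) s y)
    (hlip : ∀ y ∈ s, ∀ z ∈ s, ‖g y - g z‖ ≤ β * ‖y - z‖) (hx : x ∈ s) (hHs : H ⊆ s)
    (hx' : x' ∈ H) (hmin : IsMinOn (quadModel f g β x) H x' ∨ IsMinOn f H x') (hy : y ∈ H) :
    f x' ≤ quadModel f g β x y := by
  rcases hmin with hmin | hmin
  · exact (le_quadModel_of_lipschitz_gradient hs hg hlip hx (hHs hx')).trans (hmin hy)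
  · exact (hmin hy).trans (le_quadModel_of_lipschitz_gradient hs hg hlip hx (hHs hy))

lemma isMinOn_quadModel {f : E → ℝ} {g : E → E} {H : Set E} {β : ℝ} {x x' : E}
    (h : ∀ y ∈ H, ⟪g x, x'⟫ + β / 2 * ‖x' - x‖ ^ 2 ≤ ⟪g x, y⟫ + β / 2 * ‖y - x‖ ^ 2) :
    IsMinOn (quadModel f g β x) H x' := fun y hy ↦ by
  simp only [quadModel, inner_sub_right, Set.mem_ofPred_eq]
  linarith [h y hy]

end Hilbert

lemma min_one_add_sqrt_le {a b h : ℝ} (hb : 0 ≤ b) (hh : 0 ≤ h) :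
    min 1 (a * h + √(b * h)) ≤ min √(2 * max (2 * b) a * h) 1 := by
  set m := max (2 * b) a
  have : 0 ≤ m := le_max_of_le_left (by positivity)
  refine le_min ?_ (min_le_left _ _)
  -- For `r = √(2 m h) ≤ 1` both summands are at most `r / 2`, the first because `r ^ 2 ≤ r`.
  rcases le_total 1 √(2 * m * h) with hr | hr
  · exact (min_le_left _ _).trans hr
  refine (min_le_right _ _).trans ?_
  have hsq : √(2 * m * h) ^ 2 = 2 * m * h := Real.sq_sqrt (by positivity)
  have hlinear : a * h ≤ √(2 * m * h) / 2 := by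
    have hmh : a * h ≤ m * h := by gcongr; exact le_max_right _ _
    nlinarith [Real.sqrt_nonneg (2 * m * h)]
  have hsqrt : √(b * h) ≤ √(2 * m * h) / 2 := by
    refine Real.sqrt_le_iff.2 ⟨by positivity, ?_⟩
    have hbh : 2 * b * h ≤ m * h := by gcongr; exact le_max_left _ _
    linarith
  linarith

lemma one_sub_mul_exp_neg_div_le {C : ℝ} (hC : 0 ≤ C) (R s : ℝ) :
    (1 - 1 / R) * (C * Real.exp (-(s / R))) ≤ C * Real.exp (-((s + 1) / R)) := by
  calc (1 - 1 / R) * (C * Real.exp (-(s / R)))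
      ≤ Real.exp (-(1 / R)) * (C * Real.exp (-(s / R))) := by
        gcongr
        exact Real.one_sub_le_exp_neg _
    _ = C * Real.exp (-((s + 1) / R)) := by
        rw [mul_left_comm, ← Real.exp_add]
        ring_nf

theorem fw_nep_polytope_linear_rate_strict_complementarity_general {E : Type*}
    [NormedAddCommGroup E] [InnerProductSpace ℝ E] [CompleteSpace E] {V K : Set E}
    (hVK : V ⊆ K) (hK : IsClosed K) {f : E → ℝ} {g : E → E} (hf : ConvexOn ℝ K f)
    (hgrad : ∀ y ∈ K, HasGradientWithinAt f (g y) K y) {β : ℝ} (hβ : 0 ≤ β)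
    (hsmooth : ∀ y ∈ K, ∀ z ∈ K, ‖g y - g z‖ ≤ β * ‖y - z‖)
    {fstar : ℝ} (hfstar : ∀ y ∈ K, fstar ≤ f y)
    {Xstar : Set E} (hXstar : Xstar = {y | y ∈ K ∧ f y = fstar}) (hXne : Xstar.Nonempty)
    {α : ℝ} (hα : 0 < α) (hQG : ∀ y ∈ K, infDist y Xstar ^ 2 ≤ 2 / α * (f y - fstar))
    {Fstar : Set E} (hXF : Xstar ⊆ Fstar) (hFvert : Fstar ⊆ convexHull ℝ (V ∩ Fstar))
    {D : ℝ} (hD : ∀ u ∈ Fstar, ∀ p ∈ Fstar, ‖u - p‖ ≤ D)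
    {m C M : ℝ} (hm : 0 ≤ m) (hM : max (4 * β / α + 8 * β * D ^ 2 * m) (1 / 2) ≤ M)
    {ρ : ℕ → ℝ}
    (hρ : ∀ t : ℕ, 1 ≤ t →
      ρ t = min √(2 * m * C * Real.exp (-(((t : ℝ) - 1) / (4 * M)))) 1 / (2 * M))
    {ι : ℕ → Type*} [∀ t, Fintype (ι t)] {x w : ℕ → E} {v : ∀ t, ι t → E} {lam : ∀ t, ι t → ℝ}
    (hC : f (x 1) - fstar ≤ C) (hv : ∀ t, 1 ≤ t → ∀ i, v t i ∈ V)
    (hlam0 : ∀ t, 1 ≤ t → ∀ i, 0 ≤ lam t i) (hlam1 : ∀ t, 1 ≤ t → ∑ i, lam t i = 1)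
    (hx : ∀ t, 1 ≤ t → x t = ∑ i, lam t i • v t i) (hwV : ∀ t, 1 ≤ t → w t ∈ V)
    (hw : ∀ t, 1 ≤ t → ∀ u ∈ V, ⟪g (x t), w t⟫ + β * ρ t * ‖w t - x t‖ ^ 2
      ≤ ⟪g (x t), u⟫ + β * ρ t * ‖u - x t‖ ^ 2)
    (hmem : ∀ t, 1 ≤ t → x (t + 1) ∈ convexHull ℝ (insert (w t) (Set.range (v t))))
    (hmin : ∀ t, 1 ≤ t →
      IsMinOn (quadModel f g β (x t)) (convexHull ℝ (insert (w t) (Set.range (v t))))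
        (x (t + 1)) ∨
      IsMinOn f (convexHull ℝ (insert (w t) (Set.range (v t)))) (x (t + 1)))
    (hdecomp : ∀ t, 1 ≤ t → ∀ p ∈ Xstar, (∀ y ∈ Xstar, ‖x t - p‖ ≤ ‖x t - y‖) →
      ∃ Δ : ι t → ℝ, ∃ z ∈ Fstar, (∀ i, Δ i ∈ Set.Icc 0 (lam t i)) ∧
        p = ∑ i, (lam t i - Δ i) • v t i + (∑ i, Δ i) • z ∧
        ∑ i, Δ i ≤ min √(2 * m * (f (x t) - fstar)) 1)
    (t : ℕ) (ht : 1 ≤ t) :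
    f (x t) - fstar ≤ C * Real.exp (-(((t : ℝ) - 1) / (4 * M))) := by
  have hxK : ∀ t, 1 ≤ t → x t ∈ K := fun t ht ↦ hx t ht ▸
    hf.1.sum_mem (fun i _ ↦ hlam0 t ht i) (hlam1 t ht) fun i _ ↦ hVK (hv t ht i)
  have hC0 : 0 ≤ C := (sub_nonneg.2 (hfstar _ (hxK 1 le_rfl))).trans hC
  obtain ⟨hM₁, hM₂⟩ := max_le_iff.1 hM
  have hXcompl : IsComplete Xstar := hXstar ▸
    (isClosed_setOf_mem_and_eq_of_hasGradientWithinAt hK hgrad fstar).isComplete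
  have hXconv : Convex ℝ Xstar := hXstar ▸ convex_setOf_mem_and_eq_of_forall_le hf hfstar
  induction t, ht using Nat.le_induction with
  | base => simpa using hC
  | succ t ht ih =>
    obtain ⟨p, hpX, hxp⟩ :=
      exists_norm_sub_eq_infDist_of_isComplete_convex hXne hXcompl hXconv (x t)
    obtain ⟨Δ, z, hz, hΔ, hp, hΔs⟩ := hdecomp t ht p hpX fun y hy ↦ by
      rw [hxp, ← dist_eq_norm]
      exact infDist_le_dist_of_mem hy
    obtain ⟨hpK, hfp⟩ : p ∈ K ∧ f p = fstar := by rwa [hXstar] at hpX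
    set e := C * Real.exp (-(((t : ℝ) - 1) / (4 * M))) with he
    obtain ⟨y, hyH, hy⟩ := exists_mem_convexHull_quadModel_sub_le hα hβ hm hM₁ hM₂
      (hx t ht) (hlam1 t ht) hΔ hp (hFvert hz)
      (fun u hu ↦ mem_closedBall_iff_norm.2 (hD u hu.2 p (hXF hpX)))
      hΔs (fun u hu ↦ by simpa only [hρ t ht, he, mul_assoc] using hw t ht u hu.1) ih
      (hxp ▸ hQG _ (hxK t ht))
      (hfp ▸ add_inner_le_of_convexOn_of_hasGradientWithinAt hf (hgrad _ (hxK t ht)) (hxK t ht) hpK)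
    have hHK : convexHull ℝ (insert (w t) (Set.range (v t))) ⊆ K :=
      convexHull_min (Set.insert_subset (hVK (hwV t ht))
        (Set.range_subset_iff.2 fun i ↦ hVK (hv t ht i))) hf.1
    calc f (x (t + 1)) - fstar
        ≤ quadModel f g β (x t) y - fstar := by
          grw [le_quadModel_of_isMinOn hf.1 hgrad hsmooth (hxK t ht) hHK (hmem t ht) (hmin t ht)
            hyH]
      _ ≤ (1 - 1 / (4 * M)) * e := hy
      _ ≤ C * Real.exp (-((((t + 1 : ℕ) : ℝ) - 1) / (4 * M))) := by
          simpa [sub_add_cancel] using one_sub_mul_exp_neg_div_le hC0 (4 * M) ((t : ℝ) - 1)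

/-- linear convergence of the NEP oracle-based fully-corrective
Frank-Wolfe variant for polytopes under quadratic growth and the
strict-complementarity-type decomposition property (Theorem 4, part 1). -/
theorem fw_nep_polytope_linear_rate_strict_complementarity {d : ℕ}
    (V : Set (EuclideanSpace ℝ (Fin d))) (hVfin : V.Finite)
    (K : Set (EuclideanSpace ℝ (Fin d))) (hK : K = convexHull ℝ V)
    (hVext : V = K.extremePoints ℝ)
    (f : EuclideanSpace ℝ (Fin d) → ℝ)
    (g : EuclideanSpace ℝ (Fin d) → EuclideanSpace ℝ (Fin d))
    (hfconv : ConvexOn ℝ Set.univ f)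
    (hgrad : ∀ y, HasGradientAt f (g y) y)
    (β : ℝ) (hβ : 0 < β)
    (hsmooth : ∀ y z, ‖g y - g z‖ ≤ β * ‖y - z‖)
    (fstar : ℝ) (hfstar : ∀ y ∈ K, fstar ≤ f y)
    (Xstar : Set (EuclideanSpace ℝ (Fin d)))
    (hXstar : Xstar = {y | y ∈ K ∧ f y = fstar}) (hXne : Xstar.Nonempty)
    -- quadratic growth
    (α : ℝ) (hα : 0 < α)
    (hQG : ∀ y ∈ K, infDist y Xstar ^ 2 ≤ 2 / α * (f y - fstar))
    -- the set F*
    (Fstar : Set (EuclideanSpace ℝ (Fin d)))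
    (hFK : Fstar ⊆ K) (hFconv : Convex ℝ Fstar) (hXF : Xstar ⊆ Fstar)
    (hFvert : ∀ y ∈ Fstar, y ∈ convexHull ℝ (V ∩ Fstar))
    (DF : ℝ) (hDF : ∀ u ∈ Fstar, ∀ w ∈ Fstar, ‖u - w‖ ≤ DF)
    -- constants
    (δ κ C M₁ : ℝ) (hδ : 0 < δ) (hκ : 0 ≤ κ)
    (hM₁ : max (4 * β / α + 8 * β * DF ^ 2 * max (2 * κ) δ⁻¹) (1 / 2) ≤ M₁)
    -- step-size parameters
    (ρ : ℕ → ℝ)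
    (hρ : ∀ t : ℕ, 1 ≤ t → ρ t =
      min (Real.sqrt (2 * max (2 * κ) δ⁻¹ * C * Real.exp (-(((t : ℝ) - 1) / (4 * M₁))))) 1
        / (2 * M₁))
    -- the iterates and their vertex decompositions
    (x : ℕ → EuclideanSpace ℝ (Fin d))
    (k : ℕ → ℕ) (vv : ∀ t : ℕ, Fin (k t) → EuclideanSpace ℝ (Fin d))
    (lam : ∀ t : ℕ, Fin (k t) → ℝ) (w : ℕ → EuclideanSpace ℝ (Fin d))
    (hx1 : x 1 ∈ V) (hC : f (x 1) - fstar ≤ C)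
    (hvvV : ∀ t, 1 ≤ t → ∀ i, vv t i ∈ V)
    (hlam0 : ∀ t, 1 ≤ t → ∀ i, 0 ≤ lam t i)
    (hlam1 : ∀ t, 1 ≤ t → ∑ i, lam t i = 1)
    (hxdecomp : ∀ t, 1 ≤ t → x t = ∑ i, lam t i • vv t i)
    (hwV : ∀ t, 1 ≤ t → w t ∈ V)
    (hwopt : ∀ t, 1 ≤ t → ∀ u ∈ V,
      ⟪g (x t), w t⟫ + β * ρ t * ‖w t - x t‖ ^ 2
        ≤ ⟪g (x t), u⟫ + β * ρ t * ‖u - x t‖ ^ 2)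
    (hstep : ∀ t, 1 ≤ t →
      (x (t + 1) ∈ convexHull ℝ (insert (w t) (Set.range (vv t))) ∧
        ∀ y ∈ convexHull ℝ (insert (w t) (Set.range (vv t))),
          ⟪g (x t), x (t + 1)⟫ + β / 2 * ‖x (t + 1) - x t‖ ^ 2
            ≤ ⟪g (x t), y⟫ + β / 2 * ‖y - x t‖ ^ 2) ∨
      (x (t + 1) ∈ convexHull ℝ (insert (w t) (Set.range (vv t))) ∧
        ∀ y ∈ convexHull ℝ (insert (w t) (Set.range (vv t))), f (x (t + 1)) ≤ f y))
    -- the vertex-decomposition property relative to the closest optimal point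
    (hclose : ∀ t, 1 ≤ t → ∀ xst ∈ Xstar, (∀ y ∈ Xstar, ‖x t - xst‖ ≤ ‖x t - y‖) →
      ∃ Δ : Fin (k t) → ℝ, ∃ z ∈ Fstar,
        (∀ i, Δ i ∈ Set.Icc 0 (lam t i)) ∧
        xst = ∑ i, (lam t i - Δ i) • vv t i + (∑ i, Δ i) • z ∧
        ∑ i, Δ i ≤ min 1 (δ⁻¹ * (f (x t) - fstar)
          + Real.sqrt (κ * (f (x t) - fstar)))) :
    ∀ t : ℕ, 1 ≤ t →
      f (x t) - fstar ≤ C * Real.exp (-(((t : ℝ) - 1) / (4 * M₁))) := by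
  have hVK : V ⊆ K := hK ▸ subset_convexHull ℝ V
  have hKconv : Convex ℝ K := hK ▸ convex_convexHull ℝ V
  have hKclosed : IsClosed K := hK ▸ (hVfin.isCompact_convexHull ℝ).isClosed
  have hxK : ∀ t, 1 ≤ t → x t ∈ K := fun t ht ↦ hxdecomp t ht ▸
    hKconv.sum_mem (fun i _ ↦ hlam0 t ht i) (hlam1 t ht) fun i _ ↦ hVK (hvvV t ht i)
  exact fw_nep_polytope_linear_rate_strict_complementarity_general hVK hKclosed
    (hfconv.subset (Set.subset_univ K) hKconv)
    (fun y _ ↦ (hgrad y).hasFDerivAt.hasFDerivWithinAt) hβ.le (fun y _ z _ ↦ hsmooth y z)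
    hfstar hXstar hXne hα hQG hXF hFvert hDF (le_max_of_le_left (by positivity)) hM₁ hρ hC hvvV
    hlam0 hlam1 hxdecomp hwV hwopt (fun t ht ↦ (hstep t ht).elim And.left And.left)
    (fun t ht ↦ (hstep t ht).imp (fun h ↦ isMinOn_quadModel h.2) And.right)
    fun t ht p hp hpmin ↦ by
      obtain ⟨Δ, z, hz, hΔ, hpΔ, hle⟩ := hclose t ht p hp hpmin
      exact ⟨Δ, z, hz, hΔ, hpΔ,
        hle.trans (min_one_add_sqrt_le hκ (sub_nonneg.2 (hfstar _ (hxK t ht))))⟩
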